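/- Let n ≥ 1 and let r, s > 0 and t > −1 satisfy r + s − t > n + 1. Then for all z, u ∈ T_B, ∫_{T_B} ρ(w)^t · ρ(z,w)^{−r} · ρ(w,u)^{−s} dV(w) = C₁ · ρ(z,u)^{−(r+s−t−n−1)}, where C₁ = 2^{n+1} πⁿ Γ(1+t) Γ(r+s−t−n−1) / (Γ(r) Γ(s)), the integral converging absolutely. -/

import Mathlib

open MeasureTheory Complex ComplexConjugate

noncomputable section

/-- The tube domain `T_B ⊆ ℂ^(n+1)` (paper dimension `n+1 ≥ 1`). -/
def TB (n : ℕ) : Set (Fin (n + 1) → ℂ) :=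
  {z | ∑ k : Fin n, (z k.castSucc).im ^ 2 < (z (Fin.last n)).im}

/-- `ρ(z) = y_n − |y'|²`. -/
def rho (n : ℕ) (z : Fin (n + 1) → ℂ) : ℝ :=
  (z (Fin.last n)).im - ∑ k : Fin n, (z k.castSucc).im ^ 2

/-- `ρ(z,w) = (1/4)(Σ (z_k − conj w_k)² − 2i(z_n − conj w_n))`. -/
def rho2 (n : ℕ) (z w : Fin (n + 1) → ℂ) : ℂ :=
  (1 / 4) * ((∑ k : Fin n, (z k.castSucc - conj (w k.castSucc)) ^ 2)
    - 2 * Complex.I * (z (Fin.last n) - conj (w (Fin.last n))))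

/-- The point `𝐢 = (0,…,0,i) ∈ T_B`. -/
def iPt (n : ℕ) : Fin (n + 1) → ℂ := fun j => if j = Fin.last n then Complex.I else 0

/-- `c_α = Γ(n+1+α)/(2^(n+1) πⁿ Γ(α+1))` (paper `n` = `n+1` here). -/
def cA (n : ℕ) (α : ℝ) : ℝ :=
  Real.Gamma ((n : ℝ) + 2 + α) / (2 ^ (n + 2) * Real.pi ^ (n + 1) * Real.Gamma (α + 1))

/-- Wirtinger derivative `∂g/∂z_j = (1/2)(∂g/∂x_j − i ∂g/∂y_j)`. -/
def wdz (n : ℕ) (j : Fin (n + 1)) (g : (Fin (n + 1) → ℂ) → ℂ) : (Fin (n + 1) → ℂ) → ℂ :=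
  fun z => (1 / 2) * (fderiv ℝ g z (Pi.single j 1) - Complex.I * fderiv ℝ g z (Pi.single j Complex.I))

/-- Wirtinger derivative `∂g/∂z̄_j = (1/2)(∂g/∂x_j + i ∂g/∂y_j)`. -/
def wdzbar (n : ℕ) (j : Fin (n + 1)) (g : (Fin (n + 1) → ℂ) → ℂ) : (Fin (n + 1) → ℂ) → ℂ :=
  fun z => (1 / 2) * (fderiv ℝ g z (Pi.single j 1) + Complex.I * fderiv ℝ g z (Pi.single j Complex.I))

/-! For fixed `w'` and `η = ρ(w)`, only `Re wₙ` varies along the real translations of `T_B`, and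
`ρ(z,w)` and `ρ(w,u)` move along opposite vertical lines. Integrating over `Re wₙ` first is
therefore Cauchy's beta integral, which gives the power `-(r + s - 1)` of `ρ(z,w) + ρ(w,u)`. That
sum equals `η + ρ(z,u)` plus a Gaussian phase in `w'`, so writing its power as a Gamma integral
reduces the integral over `w'` to Gaussian integrals and that over `η` to a Gamma integral. Both
remaining powers of the subordination variable collect into one more Gamma integral, that of a
power of `ρ(z,u)`.

Cauchy's beta integral with `s > 1` is Parseval's identity for two gamma densities; the case
`s ≤ 1` is reduced to it by integration by parts.

For absolute convergence, `|ρ(z,w)|^(-r) |ρ(w,u)|^(-s)` is at most the sum of the two powers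
`-(r + s)`, whose integrals are the case `u = z` of the same computation. -/

open Set Filter Topology Asymptotics

section GammaIntegral

theorem eqOn_re_pos_of_forall_ofReal {f g : ℂ → ℂ} (hf : DifferentiableOn ℂ f {z | 0 < z.re})
    (hg : DifferentiableOn ℂ g {z | 0 < z.re}) (hfg : ∀ y : ℝ, 0 < y → f y = g y) :
    EqOn f g {z | 0 < z.re} := by
  have hopen : IsOpen {z : ℂ | 0 < z.re} := isOpen_lt continuous_const continuous_re
  refine (hf.analyticOnNhd hopen).eqOn_of_preconnected_of_frequently_eq (hg.analyticOnNhd hopen)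
    (convex_halfSpace_re_gt 0).isPreconnected (z₀ := ((1 : ℝ) : ℂ)) (by simp) ?_
  have hmap : Tendsto ((↑) : ℝ → ℂ) (𝓝[≠] 1) (𝓝[≠] ((1 : ℝ) : ℂ)) :=
    continuous_ofReal.continuousWithinAt.tendsto_nhdsWithin fun y hy => by simpa using hy
  have hpos : ∀ᶠ y : ℝ in 𝓝[≠] 1, 0 < y := nhdsWithin_le_nhds (lt_mem_nhds one_pos)
  exact hmap.frequently (hpos.mono hfg).frequently

variable {a : ℝ} {c : ℂ}

theorem norm_rpow_mul_cexp_neg_mul (a : ℝ) (c : ℂ) {x : ℝ} (hx : 0 ≤ x) :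
    ‖((x ^ a : ℝ) : ℂ) * cexp (-(c * x))‖ = x ^ a * Real.exp (-(c.re * x)) := by
  rw [norm_mul, norm_real, Real.norm_of_nonneg (by positivity), norm_exp, neg_re, re_mul_ofReal]

theorem integrableOn_rpow_mul_exp_neg_mul_Ioi {b : ℝ} (ha : 0 < a) (hb : 0 < b) :
    IntegrableOn (fun x : ℝ => x ^ (a - 1) * Real.exp (-(b * x))) (Ioi 0) := by
  simpa using integrableOn_rpow_mul_exp_neg_mul_rpow (s := a - 1) (by linarith) one_pos hb

theorem integrableOn_rpow_mul_cexp_neg_mul_Ioi (ha : 0 < a) (hc : 0 < c.re) :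
    IntegrableOn (fun x : ℝ => ((x ^ (a - 1) : ℝ) : ℂ) * cexp (-(c * x))) (Ioi 0) := by
  refine Integrable.mono' (integrableOn_rpow_mul_exp_neg_mul_Ioi ha hc) (by fun_prop) ?_
  filter_upwards [ae_restrict_mem measurableSet_Ioi] with x hx
  exact (norm_rpow_mul_cexp_neg_mul (a - 1) c (mem_Ioi.1 hx).le).le

theorem differentiableOn_integral_rpow_mul_cexp_neg_mul_Ioi (ha : 0 < a) :
    DifferentiableOn ℂ
      (fun c : ℂ => ∫ x : ℝ in Ioi 0, ((x ^ (a - 1) : ℝ) : ℂ) * cexp (-(c * x)))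
      {c | 0 < c.re} := by
  let μ : Measure ℝ :=
    (volume.restrict (Ioi 0)).withDensity fun x => ENNReal.ofReal (x ^ (a - 1))
  have toReal_density {x : ℝ} (hx : x ∈ Ioi 0) :
      (ENNReal.ofReal (x ^ (a - 1))).toReal = x ^ (a - 1) :=
    ENNReal.toReal_ofReal (Real.rpow_nonneg (mem_Ioi.1 hx).le _)
  have hMGF (c : ℂ) : ∫ x : ℝ in Ioi 0, ((x ^ (a - 1) : ℝ) : ℂ) * cexp (-(c * x)) =
      ProbabilityTheory.complexMGF (fun x => -x) μ c := by
    rw [ProbabilityTheory.complexMGF,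
      integral_withDensity_eq_integral_toReal_smul (by fun_prop) (by simp)]
    refine setIntegral_congr_fun measurableSet_Ioi fun x hx => ?_
    simp [toReal_density hx]
  have hsub : Ioi 0 ⊆ ProbabilityTheory.integrableExpSet (fun x => -x) μ := fun y hy => by
    rw [ProbabilityTheory.integrableExpSet, mem_ofPred_eq,
      integrable_withDensity_iff_integrable_smul' (by fun_prop) (by simp)]
    refine (integrableOn_rpow_mul_cexp_neg_mul_Ioi (c := y) ha (by simpa using hy)).norm.congr ?_
    filter_upwards [ae_restrict_mem measurableSet_Ioi] with x hx
    rw [norm_rpow_mul_cexp_neg_mul (a - 1) _ (mem_Ioi.1 hx).le, toReal_density hx]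
    simp
  simp_rw [hMGF]
  exact ProbabilityTheory.differentiableOn_complexMGF.mono fun c hc =>
    interior_maximal hsub isOpen_Ioi hc

theorem integral_rpow_mul_cexp_neg_mul_Ioi (ha : 0 < a) (hc : 0 < c.re) :
    ∫ x : ℝ in Ioi 0, ((x ^ (a - 1) : ℝ) : ℂ) * cexp (-(c * x)) =
      Real.Gamma a * c ^ (-(a : ℂ)) := by
  refine eqOn_re_pos_of_forall_ofReal (differentiableOn_integral_rpow_mul_cexp_neg_mul_Ioi ha)
    (g := fun c => Real.Gamma a * c ^ (-(a : ℂ))) (fun w hw => ?_) (fun y hy => ?_) hc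
  · exact ((differentiableAt_id.cpow_const (.inl hw)).const_mul _).differentiableWithinAt
  · have hreal := congrArg ((↑) : ℝ → ℂ) (Real.integral_rpow_mul_exp_neg_mul_Ioi ha hy)
    rw [← integral_complex_ofReal, one_div, Real.inv_rpow hy.le, ← Real.rpow_neg hy.le, mul_comm,
      ofReal_mul (Real.Gamma a), ofReal_cpow hy.le, ofReal_neg] at hreal
    rw [← hreal]
    push_cast
    rfl

end GammaIntegral

section CauchyBetaKernel

/-- The integrand of Cauchy's beta integral. -/
def cauchyBetaKernel (a b : ℂ) (r s x : ℝ) : ℂ :=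
  (a + x * I) ^ (-(r : ℂ)) * (b - x * I) ^ (-(s : ℂ))

variable {a b : ℂ} {r s : ℝ}

theorem add_ofReal_mul_I_mem_slitPlane (ha : 0 < a.re) (x : ℝ) : a + x * I ∈ slitPlane :=
  .inl (by simpa using ha)

theorem sub_ofReal_mul_I_mem_slitPlane (hb : 0 < b.re) (x : ℝ) : b - x * I ∈ slitPlane :=
  .inl (by simpa using hb)

theorem conj_add_ofReal_mul_I (a : ℂ) (x : ℝ) : conj (a + x * I) = conj a - x * I := by
  simp [sub_eq_add_neg]

theorem isTheta_norm_add_ofReal_mul_I (ha : 0 < a.re) :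
    (fun x : ℝ => ‖a + x * I‖) =Θ[⊤] fun x => 1 + ‖x‖ := by
  constructor
  · refine IsBigO.of_bound (1 + ‖a‖) (.of_forall fun x => ?_)
    have hx : ‖a + x * I‖ ≤ ‖a‖ + ‖x‖ := (norm_add_le _ _).trans_eq (by simp)
    rw [norm_norm, Real.norm_of_nonneg (by positivity)]
    nlinarith [mul_nonneg (norm_nonneg a) (norm_nonneg x)]
  · refine IsBigO.of_bound (1 + (1 + ‖a‖) / a.re) (.of_forall fun x => ?_)
    have hre : a.re ≤ ‖a + x * I‖ := by simpa using re_le_norm (a + x * I)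
    have hx : ‖x‖ ≤ ‖a + x * I‖ + ‖a‖ := by simpa using norm_sub_le (a + x * I) a
    have hscale : 1 + ‖a‖ ≤ (1 + ‖a‖) / a.re * ‖a + x * I‖ := by
      rw [div_mul_eq_mul_div, le_div_iff₀ ha]
      gcongr
    rw [norm_norm, Real.norm_of_nonneg (by positivity)]
    linarith

theorem norm_cauchyBetaKernel (a b : ℂ) (r s x : ℝ) :
    ‖cauchyBetaKernel a b r s x‖ = ‖a + x * I‖ ^ (-r) * ‖conj b + x * I‖ ^ (-s) := by
  have hconj : ‖b - x * I‖ = ‖conj b + x * I‖ := by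
    rw [← norm_conj (conj b + x * I), conj_add_ofReal_mul_I, conj_conj]
  rw [cauchyBetaKernel, norm_mul, ← ofReal_neg, ← ofReal_neg, norm_cpow_real, norm_cpow_real, hconj]

theorem isTheta_cauchyBetaKernel (ha : 0 < a.re) (hb : 0 < b.re) (r s : ℝ) :
    cauchyBetaKernel a b r s =Θ[⊤] fun x => (1 + ‖x‖) ^ (-(r + s)) := by
  have hnonneg : 0 ≤ᶠ[⊤] fun x : ℝ => 1 + ‖x‖ := .of_forall fun x => by positivity
  have hr := (isTheta_norm_add_ofReal_mul_I ha).rpow (r := -r)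
    (.of_forall fun x => norm_nonneg _) hnonneg
  have hs := (isTheta_norm_add_ofReal_mul_I (a := conj b) (by simpa using hb)).rpow (r := -s)
    (.of_forall fun x => norm_nonneg _) hnonneg
  rw [← isTheta_norm_left]
  simpa only [norm_cauchyBetaKernel, neg_add, Real.rpow_add (by positivity : 0 < 1 + ‖(_ : ℝ)‖)]
    using hr.mul hs

theorem continuous_cauchyBetaKernel (ha : 0 < a.re) (hb : 0 < b.re) (r s : ℝ) :
    Continuous (cauchyBetaKernel a b r s) :=
  .mul (.cpow (by fun_prop) continuous_const (add_ofReal_mul_I_mem_slitPlane ha))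
    (.cpow (by fun_prop) continuous_const (sub_ofReal_mul_I_mem_slitPlane hb))

theorem integrable_cauchyBetaKernel (ha : 0 < a.re) (hb : 0 < b.re) (hrs : 1 < r + s) :
    Integrable (cauchyBetaKernel a b r s) :=
  (isTheta_cauchyBetaKernel ha hb r s).1.integrable
    (continuous_cauchyBetaKernel ha hb r s).aestronglyMeasurable
    (integrable_one_add_norm (by simpa using hrs))

theorem tendsto_cauchyBetaKernel_cocompact (ha : 0 < a.re) (hb : 0 < b.re) (hrs : 0 < r + s) :
    Tendsto (cauchyBetaKernel a b r s) (cocompact ℝ) (𝓝 0) :=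
  ((isTheta_cauchyBetaKernel ha hb r s).1.mono le_top).trans_tendsto <|
    (tendsto_rpow_neg_atTop hrs).comp <|
      tendsto_atTop_add_const_left _ 1 tendsto_norm_cocompact_atTop

theorem hasDerivAt_cauchyBetaKernel (ha : 0 < a.re) (hb : 0 < b.re) (r s x : ℝ) :
    HasDerivAt (cauchyBetaKernel a b r s)
      (I * (s * cauchyBetaKernel a b r (s + 1) x - r * cauchyBetaKernel a b (r + 1) s x)) x := by
  have hleft : HasDerivAt (fun w : ℂ => a + w * I) I x := by
    simpa using! ((hasDerivAt_id (x : ℂ)).mul_const I).const_add a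
  have hright : HasDerivAt (fun w : ℂ => b - w * I) (-I) x := by
    simpa using! ((hasDerivAt_id (x : ℂ)).mul_const I).const_sub b
  convert! ((hleft.cpow_const (c := -r) (add_ofReal_mul_I_mem_slitPlane ha x)).mul
    (hright.cpow_const (c := -s) (sub_ofReal_mul_I_mem_slitPlane hb x))).comp_ofReal using 1
  simp only [cauchyBetaKernel, ofReal_add, ofReal_one, neg_add']
  ring

theorem add_mul_cauchyBetaKernel (ha : 0 < a.re) (hb : 0 < b.re) (r s x : ℝ) :
    (a + b) * cauchyBetaKernel a b (r + 1) (s + 1) x =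
      cauchyBetaKernel a b (r + 1) s x + cauchyBetaKernel a b r (s + 1) x := by
  have hleft := slitPlane_ne_zero (add_ofReal_mul_I_mem_slitPlane ha x)
  have hright := slitPlane_ne_zero (sub_ofReal_mul_I_mem_slitPlane hb x)
  simp only [cauchyBetaKernel, ofReal_add, ofReal_one, neg_add', cpow_sub _ _ hleft,
    cpow_sub _ _ hright, cpow_one]
  field_simp
  ring

end CauchyBetaKernel

section CauchyBeta

open scoped FourierTransform

variable {a b : ℂ} {r s : ℝ}

/-- The one-sided gamma density `x ↦ x^(r-1) e^{-ax}`, extended by zero to `x ≤ 0`; its Fourier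
transform is a power of an affine function. -/
def gammaDensity (a : ℂ) (r : ℝ) : ℝ → ℂ :=
  indicator (Ioi 0) fun x => ((x ^ (r - 1) : ℝ) : ℂ) * cexp (-(a * x))

theorem integrable_gammaDensity (ha : 0 < a.re) (hr : 0 < r) : Integrable (gammaDensity a r) :=
  (integrable_indicator_iff measurableSet_Ioi).2 (integrableOn_rpow_mul_cexp_neg_mul_Ioi hr ha)

theorem continuous_gammaDensity (a : ℂ) (hr : 1 < r) : Continuous (gammaDensity a r) := by
  have hmax : gammaDensity a r = fun x : ℝ => ((max x 0 ^ (r - 1) : ℝ) : ℂ) * cexp (-(a * x)) := by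
    funext x
    rcases lt_or_ge 0 x with hx | hx
    · rw [gammaDensity, indicator_of_mem (mem_Ioi.2 hx), max_eq_left hx.le]
    · rw [gammaDensity, indicator_of_notMem (notMem_Ioi.2 hx), max_eq_right hx,
        Real.zero_rpow (by linarith), ofReal_zero, zero_mul]
  have hrpow : Continuous fun x : ℝ => max x 0 ^ (r - 1) :=
    (continuous_id.max continuous_const).rpow_const fun _ => .inr (by linarith)
  rw [hmax]
  fun_prop

theorem fourier_gammaDensity (ha : 0 < a.re) (hr : 0 < r) (v : ℝ) :
    𝓕 (gammaDensity a r) v = Real.Gamma r * (a + (2 * Real.pi * v : ℝ) * I) ^ (-(r : ℂ)) := by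
  rw [Real.fourier_real_eq_integral_exp_smul,
    ← integral_rpow_mul_cexp_neg_mul_Ioi hr (by simpa using ha),
    ← integral_indicator measurableSet_Ioi]
  congr 1 with x
  simp only [gammaDensity, indicator]
  split_ifs
  · rw [smul_eq_mul, mul_left_comm, ← Complex.exp_add]
    congr 2
    push_cast
    ring
  · exact smul_zero _

theorem fourierInv_gammaDensity (ha : 0 < a.re) (hr : 0 < r) (v : ℝ) :
    𝓕⁻ (gammaDensity a r) v = Real.Gamma r * (a - (2 * Real.pi * v : ℝ) * I) ^ (-(r : ℂ)) := by
  rw [Real.fourierInv_eq_fourier_neg, fourier_gammaDensity ha hr, mul_neg, ofReal_neg, neg_mul,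
    sub_eq_add_neg]

theorem integrable_fourierInv_gammaDensity (ha : 0 < a.re) (hr : 1 < r) :
    Integrable (𝓕⁻ (gammaDensity a r)) := by
  have hline : Integrable fun x : ℝ => (a - x * I) ^ (-(r : ℂ)) :=
    (integrable_cauchyBetaKernel ha ha (r := 0) (by simpa)).congr
      (.of_forall fun x => by simp [cauchyBetaKernel])
  rw [funext (fourierInv_gammaDensity ha (zero_lt_one.trans hr))]
  exact (hline.comp_mul_left' Real.two_pi_pos.ne').const_mul _

theorem integral_gammaDensity_mul_gammaDensity (hab : 0 < (a + b).re) (hrs : 1 < r + s) :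
    ∫ x, gammaDensity a r x * gammaDensity b s x =
      Real.Gamma (r + s - 1) * (a + b) ^ (-((r + s - 1 : ℝ) : ℂ)) := by
  rw [← integral_rpow_mul_cexp_neg_mul_Ioi (by linarith) hab,
    ← integral_indicator measurableSet_Ioi]
  congr 1 with x
  simp only [gammaDensity, indicator]
  split_ifs with hx
  · rw [mul_mul_mul_comm, ← Complex.exp_add, ← ofReal_mul, ← Real.rpow_add hx]
    ring_nf
  · exact zero_mul _

theorem integral_fourier_mul_fourierInv_gammaDensity (ha : 0 < a.re) (hb : 0 < b.re) (hr : 0 < r)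
    (hs : 1 < s) :
    ∫ v, 𝓕 (gammaDensity a r) v * 𝓕⁻ (gammaDensity b s) v =
      Real.Gamma (r + s - 1) * (a + b) ^ (-((r + s - 1 : ℝ) : ℂ)) := by
  have hinv := integrable_fourierInv_gammaDensity hb hs
  have hfourier : Integrable (𝓕 (gammaDensity b s)) := by
    simpa [Real.fourierInv_eq_fourier_neg] using hinv.comp_neg
  calc ∫ v, 𝓕 (gammaDensity a r) v * 𝓕⁻ (gammaDensity b s) v
      = ∫ x, gammaDensity a r x * 𝓕 (𝓕⁻ (gammaDensity b s)) x := by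
        simpa using! VectorFourier.integral_fourierIntegral_smul_eq_flip (L := innerₗ ℝ)
          Real.continuous_fourierChar continuous_inner (integrable_gammaDensity ha hr) hinv
    _ = ∫ x, gammaDensity a r x * gammaDensity b s x := by
        rw [(continuous_gammaDensity b hs).fourier_fourierInv_eq
          (integrable_gammaDensity hb (zero_lt_one.trans hs)) hfourier]
    _ = _ := integral_gammaDensity_mul_gammaDensity (by simpa using add_pos ha hb) (by linarith)

theorem integral_cauchyBetaKernel_of_one_lt (ha : 0 < a.re) (hb : 0 < b.re) (hr : 0 < r)
    (hs : 1 < s) :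
    ∫ x, cauchyBetaKernel a b r s x =
      2 * Real.pi * Real.Gamma (r + s - 1) / (Real.Gamma r * Real.Gamma s) *
        (a + b) ^ (-((r + s - 1 : ℝ) : ℂ)) := by
  have hs0 := zero_lt_one.trans hs
  have hscale := Measure.integral_comp_mul_left (cauchyBetaKernel a b r s) (2 * Real.pi)
  have hparseval := integral_fourier_mul_fourierInv_gammaDensity ha hb hr hs
  have hkernel (v : ℝ) : 𝓕 (gammaDensity a r) v * 𝓕⁻ (gammaDensity b s) v =
      Real.Gamma r * Real.Gamma s * cauchyBetaKernel a b r s (2 * Real.pi * v) := by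
    rw [fourier_gammaDensity ha hr, fourierInv_gammaDensity hb hs0, mul_mul_mul_comm,
      cauchyBetaKernel]
  simp_rw [hkernel] at hparseval
  rw [integral_const_mul, hscale, abs_of_pos (inv_pos.2 Real.two_pi_pos), real_smul, ofReal_inv,
    ofReal_mul, ofReal_ofNat] at hparseval
  have hΓr : (Real.Gamma r : ℂ) ≠ 0 := ofReal_ne_zero.2 (Real.Gamma_pos_of_pos hr).ne'
  have hΓs : (Real.Gamma s : ℂ) ≠ 0 := ofReal_ne_zero.2 (Real.Gamma_pos_of_pos hs0).ne'
  have hπ : (Real.pi : ℂ) ≠ 0 := ofReal_ne_zero.2 Real.pi_ne_zero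
  field_simp at hparseval ⊢
  exact hparseval

theorem mul_integral_cauchyBetaKernel_add_one_left (ha : 0 < a.re) (hb : 0 < b.re)
    (hrs : 0 < r + s) :
    r * ∫ x, cauchyBetaKernel a b (r + 1) s x = s * ∫ x, cauchyBetaKernel a b r (s + 1) x := by
  have hint₁ := (integrable_cauchyBetaKernel ha hb (r := r + 1) (s := s)
    (by linarith)).const_mul (r : ℂ)
  have hint₂ := (integrable_cauchyBetaKernel ha hb (r := r) (s := s + 1)
    (by linarith)).const_mul (s : ℂ)
  have hlim := tendsto_cauchyBetaKernel_cocompact ha hb hrs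
  rw [cocompact_eq_atBot_atTop, tendsto_sup] at hlim
  have hzero := integral_of_hasDerivAt_of_tendsto (hasDerivAt_cauchyBetaKernel ha hb r s)
    ((hint₂.sub hint₁).const_mul I) hlim.1 hlim.2
  rw [integral_const_mul, integral_sub hint₂ hint₁, integral_const_mul, integral_const_mul,
    sub_zero] at hzero
  exact (sub_eq_zero.1 ((mul_eq_zero.1 hzero).resolve_left I_ne_zero)).symm

theorem add_mul_integral_cauchyBetaKernel (ha : 0 < a.re) (hb : 0 < b.re) (hrs : 0 < r + s) :
    (a + b) * ∫ x, cauchyBetaKernel a b (r + 1) (s + 1) x =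
      (∫ x, cauchyBetaKernel a b (r + 1) s x) + ∫ x, cauchyBetaKernel a b r (s + 1) x := by
  rw [← integral_const_mul, ← integral_add (integrable_cauchyBetaKernel ha hb (by linarith))
    (integrable_cauchyBetaKernel ha hb (by linarith))]
  simp only [add_mul_cauchyBetaKernel ha hb]

theorem integral_cauchyBetaKernel (ha : 0 < a.re) (hb : 0 < b.re) (hr : 0 < r) (hs : 0 < s)
    (hrs : 1 < r + s) :
    ∫ x, cauchyBetaKernel a b r s x =
      2 * Real.pi * Real.Gamma (r + s - 1) / (Real.Gamma r * Real.Gamma s) *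
        (a + b) ^ (-((r + s - 1 : ℝ) : ℂ)) := by
  have hab : a + b ≠ 0 := fun h => (add_pos ha hb).ne' (by simpa using congrArg re h)
  have hsucc := integral_cauchyBetaKernel_of_one_lt ha hb hr (by linarith : 1 < s + 1)
  have hsum := add_mul_integral_cauchyBetaKernel ha hb (r := r - 1) (s := s) (by linarith)
  have hparts := mul_integral_cauchyBetaKernel_add_one_left ha hb (r := r - 1) (s := s)
    (by linarith)
  rw [sub_add_cancel] at hsum hparts
  have hrec : (r + s - 1 : ℝ) * ∫ x, cauchyBetaKernel a b r s x =
      s * (a + b) * ∫ x, cauchyBetaKernel a b r (s + 1) x := by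
    push_cast at hparts ⊢
    linear_combination hparts - s * hsum
  have hκ : ((r + s - 1 : ℝ) : ℂ) ≠ 0 := ofReal_ne_zero.2 (by linarith)
  have hΓr : (Real.Gamma r : ℂ) ≠ 0 := ofReal_ne_zero.2 (Real.Gamma_pos_of_pos hr).ne'
  have hΓs : (Real.Gamma s : ℂ) ≠ 0 := ofReal_ne_zero.2 (Real.Gamma_pos_of_pos hs).ne'
  have hs' : (s : ℂ) ≠ 0 := ofReal_ne_zero.2 hs.ne'
  rw [hsucc, show r + (s + 1) - 1 = r + s - 1 + 1 by ring, Real.Gamma_add_one (by linarith),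
    Real.Gamma_add_one hs.ne', ofReal_add (r + s - 1), neg_add, cpow_add _ _ hab, ofReal_one,
    cpow_neg_one] at hrec
  refine mul_left_cancel₀ hκ (hrec.trans ?_)
  push_cast
  field_simp

end CauchyBeta

section NormLineIntegral

variable {a : ℂ} {p : ℝ}

theorem ofReal_norm_rpow_neg_eq_cauchyBetaKernel (ha : 0 < a.re) (p x : ℝ) :
    ((‖a + x * I‖ ^ (-p) : ℝ) : ℂ) = cauchyBetaKernel a (conj a) (p / 2) (p / 2) x := by
  have hslit := add_ofReal_mul_I_mem_slitPlane ha x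
  rw [cauchyBetaKernel, ← conj_add_ofReal_mul_I, ← ofReal_neg,
    conj_cpow _ _ (mem_slitPlane_iff_arg.1 hslit).1, conj_ofReal, mul_conj', norm_cpow_real,
    ← ofReal_pow, ← Real.rpow_mul_natCast (norm_nonneg _)]
  congr 2
  push_cast
  ring

theorem integrable_norm_add_ofReal_mul_I_rpow (ha : 0 < a.re) (hp : 1 < p) :
    Integrable fun x : ℝ => ‖a + x * I‖ ^ (-p) := by
  have h := integrable_cauchyBetaKernel ha (b := conj a) (by simpa) (by rwa [add_halves])
  refine (h.congr (.of_forall fun x => ?_)).re (f := fun x : ℝ => ((‖a + x * I‖ ^ (-p) : ℝ) : ℂ))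
  exact (ofReal_norm_rpow_neg_eq_cauchyBetaKernel ha p x).symm

theorem integral_norm_add_ofReal_mul_I_rpow (ha : 0 < a.re) (hp : 1 < p) :
    ∫ x : ℝ, ‖a + x * I‖ ^ (-p) =
      2 * Real.pi * Real.Gamma (p - 1) / Real.Gamma (p / 2) ^ 2 * (2 * a.re) ^ (-(p - 1)) := by
  have h := integral_cauchyBetaKernel ha (b := conj a) (by simpa) (half_pos (one_pos.trans hp))
    (half_pos (one_pos.trans hp)) (by rwa [add_halves])
  simp_rw [← ofReal_norm_rpow_neg_eq_cauchyBetaKernel ha, integral_complex_ofReal, add_conj,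
    add_halves, ← sq] at h
  apply ofReal_injective
  rw [h, ← ofReal_neg, ← ofReal_cpow (by positivity)]
  push_cast
  rfl

end NormLineIntegral

section GammaSubordination

variable {Y : Type*} [MeasurableSpace Y] {μ : Measure Y} {g Q : Y → ℂ} {σ : ℝ}

theorem integral_rpow_mul_mul_cexp_neg_mul (hσ : 0 < σ) {q : ℂ} (hq : 0 < q.re) (w : ℂ) :
    ∫ l : ℝ in Ioi 0, ((l ^ (σ - 1) : ℝ) : ℂ) * (w * cexp (-(l * q))) =
      Real.Gamma σ * (w * q ^ (-(σ : ℂ))) := by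
  rw [mul_left_comm, ← integral_rpow_mul_cexp_neg_mul_Ioi hσ hq, ← integral_const_mul]
  congr 1 with l
  ring_nf

theorem integrable_prod_rpow_mul_cexp_neg_mul [SFinite μ]
    (hg : AEStronglyMeasurable g μ) (hQ : AEStronglyMeasurable Q μ)
    (hint : ∀ l : ℝ, 0 < l → Integrable (fun y => g y * cexp (-(l * Q y))) μ)
    (hnorm : IntegrableOn
      (fun l : ℝ => l ^ (σ - 1) * ∫ y, ‖g y * cexp (-(l * Q y))‖ ∂μ) (Ioi 0)) :
    Integrable (fun p : Y × ℝ => ((p.2 ^ (σ - 1) : ℝ) : ℂ) * (g p.1 * cexp (-(p.2 * Q p.1))))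
      (μ.prod (volume.restrict (Ioi 0))) := by
  have hrpow : Measurable fun p : Y × ℝ => ((p.2 ^ (σ - 1) : ℝ) : ℂ) := by fun_prop
  have hl : Measurable fun p : Y × ℝ => (p.2 : ℂ) := by fun_prop
  refine (integrable_prod_iff' ?_).2 ⟨?_, hnorm.congr ?_⟩
  · exact hrpow.aestronglyMeasurable.mul <|
      (hg.comp_fst (ν := volume.restrict (Ioi (0 : ℝ)))).mul <|
        continuous_exp.comp_aestronglyMeasurable (hl.aestronglyMeasurable.mul hQ.comp_fst).neg
  · filter_upwards [ae_restrict_mem measurableSet_Ioi] with l hl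
    exact (hint l hl).const_mul _
  · filter_upwards [ae_restrict_mem measurableSet_Ioi] with l hl
    simp only [norm_mul ((l ^ (σ - 1) : ℝ) : ℂ), integral_const_mul, norm_real,
      Real.norm_of_nonneg (Real.rpow_nonneg (mem_Ioi.1 hl).le _)]

theorem integrable_mul_cpow_neg [SFinite μ] (hσ : 0 < σ)
    (hg : AEStronglyMeasurable g μ) (hQ : AEStronglyMeasurable Q μ) (hQre : ∀ᵐ y ∂μ, 0 < (Q y).re)
    (hint : ∀ l : ℝ, 0 < l → Integrable (fun y => g y * cexp (-(l * Q y))) μ)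
    (hnorm : IntegrableOn
      (fun l : ℝ => l ^ (σ - 1) * ∫ y, ‖g y * cexp (-(l * Q y))‖ ∂μ) (Ioi 0)) :
    Integrable (fun y => g y * Q y ^ (-(σ : ℂ))) μ := by
  have hΓ : (Real.Gamma σ : ℂ) ≠ 0 := ofReal_ne_zero.2 (Real.Gamma_pos_of_pos hσ).ne'
  have hprod := (integrable_prod_rpow_mul_cexp_neg_mul hg hQ hint hnorm).integral_prod_left
  refine (integrable_const_mul_iff hΓ.isUnit _).1 (hprod.congr ?_)
  filter_upwards [hQre] with y hy
  exact integral_rpow_mul_mul_cexp_neg_mul hσ hy (g y)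

theorem Gamma_mul_integral_mul_cpow_neg [SFinite μ] (hσ : 0 < σ)
    (hg : AEStronglyMeasurable g μ) (hQ : AEStronglyMeasurable Q μ) (hQre : ∀ᵐ y ∂μ, 0 < (Q y).re)
    (hint : ∀ l : ℝ, 0 < l → Integrable (fun y => g y * cexp (-(l * Q y))) μ)
    (hnorm : IntegrableOn
      (fun l : ℝ => l ^ (σ - 1) * ∫ y, ‖g y * cexp (-(l * Q y))‖ ∂μ) (Ioi 0)) :
    Real.Gamma σ * ∫ y, g y * Q y ^ (-(σ : ℂ)) ∂μ =
      ∫ l : ℝ in Ioi 0, ((l ^ (σ - 1) : ℝ) : ℂ) * ∫ y, g y * cexp (-(l * Q y)) ∂μ := by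
  simp_rw [← integral_const_mul]
  rw [← integral_integral_swap (integrable_prod_rpow_mul_cexp_neg_mul hg hQ hint hnorm)]
  refine integral_congr_ae ?_
  filter_upwards [hQre] with y hy
  exact (integral_rpow_mul_mul_cexp_neg_mul hσ hy (g y)).symm

end GammaSubordination

section Gaussian

open scoped RealInnerProductSpace

variable {V : Type*} [NormedAddCommGroup V] [InnerProductSpace ℝ V]

/-- Half the squared Euclidean norm of `v + iδ`, extended bilinearly: the phase of a Gaussian whose
centre is shifted by `-iδ` in the complexification of `V`. -/
def gaussianPhase (δ v : V) : ℂ :=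
  ((‖v‖ ^ 2 / 2 - ‖δ‖ ^ 2 / 2 : ℝ) : ℂ) + I * (⟪δ, v⟫ : ℝ)

theorem gaussianPhase_re (δ v : V) : (gaussianPhase δ v).re = ‖v‖ ^ 2 / 2 - ‖δ‖ ^ 2 / 2 := by
  rw [gaussianPhase, add_re, ofReal_re, I_mul_re, ofReal_im, neg_zero, add_zero]

theorem continuous_gaussianPhase (δ : V) : Continuous (gaussianPhase δ) := by
  unfold gaussianPhase
  fun_prop

theorem gaussianPhase_I_mul (d v : ℂ) :
    gaussianPhase (I * d) v = (v - d) * conj (v + d) / 2 := by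
  rw [gaussianPhase, norm_mul, norm_I, one_mul, Complex.inner]
  apply Complex.ext <;> simp [← normSq_eq_norm_sq, normSq_apply, -ofReal_pow] <;> ring

theorem cexp_neg_mul_gaussianPhase (l : ℝ) (δ v : V) :
    cexp (-(l * gaussianPhase δ v)) =
      cexp (-(l / 2 : ℝ) * ‖v‖ ^ 2 + (-(l * I)) * ⟪δ, v⟫) * cexp (l / 2 * ‖δ‖ ^ 2) := by
  rw [← Complex.exp_add, gaussianPhase]
  push_cast
  ring_nf

variable [FiniteDimensional ℝ V] [MeasurableSpace V] [BorelSpace V] {l : ℝ}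

theorem integrable_cexp_neg_mul_gaussianPhase (hl : 0 < l) (δ : V) :
    Integrable fun v => cexp (-(l * gaussianPhase δ v)) := by
  simp_rw [cexp_neg_mul_gaussianPhase]
  exact (GaussianFourier.integrable_cexp_neg_mul_sq_norm_add (b := (l / 2 : ℝ)) (by simpa) _
    δ).mul_const _

theorem integral_cexp_neg_mul_gaussianPhase (hl : 0 < l) (δ : V) :
    ∫ v, cexp (-(l * gaussianPhase δ v)) =
      (2 * Real.pi / l) ^ (Module.finrank ℝ V / 2 : ℂ) := by
  have hl' : (l : ℂ) ≠ 0 := ofReal_ne_zero.2 hl.ne'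
  simp_rw [cexp_neg_mul_gaussianPhase]
  rw [integral_mul_const,
    GaussianFourier.integral_cexp_neg_mul_sq_norm_add (b := (l / 2 : ℝ)) (by simpa),
    mul_assoc, ← Complex.exp_add]
  have hexp : (-(l * I)) ^ 2 * (‖δ‖ : ℂ) ^ 2 / (4 * (l / 2 : ℝ)) + l / 2 * ‖δ‖ ^ 2 = 0 := by
    rw [neg_sq, mul_pow, I_sq]
    push_cast
    field_simp
    ring
  rw [hexp, Complex.exp_zero, mul_one]
  congr 1
  push_cast
  field_simp

end Gaussian

section SiegelPhase

variable {ι : Type*} [Fintype ι]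

/-- The measure `dw dη` on the parameters `(w, η) ∈ ℂ^ι × (0, ∞)` of a Siegel domain modulo its
real translations. -/
abbrev siegelMeasure (ι : Type*) [Fintype ι] : Measure ((ι → ℂ) × ℝ) :=
  volume.prod (volume.restrict (Ioi 0))

/-- The phase `η + D + ∑ₖ gaussianPhase (δₖ) (wₖ - mₖ)` in `(w, η)`: the sum of two defining kernels
of a Siegel domain, after completing squares. -/
def siegelPhase (δ m : ι → ℂ) (D : ℂ) (y : (ι → ℂ) × ℝ) : ℂ :=
  y.2 + D + ∑ k, gaussianPhase (δ k) (y.1 k - m k)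

theorem ae_snd_siegelMeasure_pos : ∀ᵐ y ∂siegelMeasure ι, 0 < y.2 :=
  Measure.quasiMeasurePreserving_snd.ae (ae_restrict_mem measurableSet_Ioi)

variable {δ m : ι → ℂ} {D : ℂ} {a l σ : ℝ}

theorem continuous_siegelPhase (δ m : ι → ℂ) (D : ℂ) : Continuous (siegelPhase δ m D) :=
  .add (by fun_prop) <| continuous_finsetSum _ fun k _ =>
    (continuous_gaussianPhase (δ k)).comp (by fun_prop)

theorem ofReal_re_siegelPhase (δ m : ι → ℂ) (D : ℂ) (y : (ι → ℂ) × ℝ) :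
    ((siegelPhase δ m D y).re : ℂ) =
      siegelPhase 0 m ((D.re - ∑ k, ‖δ k‖ ^ 2 / 2 : ℝ) : ℂ) y := by
  have hzero (v : ℂ) : gaussianPhase 0 v = ((‖v‖ ^ 2 / 2 : ℝ) : ℂ) := by simp [gaussianPhase]
  simp only [siegelPhase, add_re, ofReal_re, re_sum, gaussianPhase_re, Finset.sum_sub_distrib,
    Pi.zero_apply, hzero]
  push_cast
  ring

theorem siegelPhase_re_pos (hD : ∑ k, ‖δ k‖ ^ 2 / 2 < D.re) {y : (ι → ℂ) × ℝ} (hy : 0 < y.2) :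
    0 < (siegelPhase δ m D y).re := by
  simp only [siegelPhase, add_re, ofReal_re, re_sum, gaussianPhase_re, Finset.sum_sub_distrib]
  have hsum : 0 ≤ ∑ k, ‖y.1 k - m k‖ ^ 2 / 2 := by positivity
  linarith

theorem rpow_mul_cexp_neg_mul_siegelPhase (δ m : ι → ℂ) (D : ℂ) (a l : ℝ) (y : (ι → ℂ) × ℝ) :
    ((y.2 ^ a : ℝ) : ℂ) * cexp (-(l * siegelPhase δ m D y)) =
      cexp (-(l * D)) * ((∏ k, cexp (-(l * gaussianPhase (δ k) (y.1 k - m k)))) *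
        (((y.2 ^ a : ℝ) : ℂ) * cexp (-(l * y.2)))) := by
  rw [← Complex.exp_sum, mul_left_comm _ ((y.2 ^ a : ℝ) : ℂ), mul_left_comm _ ((y.2 ^ a : ℝ) : ℂ),
    ← Complex.exp_add, ← Complex.exp_add, Finset.sum_neg_distrib, ← Finset.mul_sum, siegelPhase]
  ring_nf

theorem integrable_prod_cexp_neg_mul_gaussianPhase_sub (hl : 0 < l) (δ m : ι → ℂ) :
    Integrable fun w : ι → ℂ => ∏ k, cexp (-(l * gaussianPhase (δ k) (w k - m k))) :=
  Integrable.fintype_prod (f := fun k v => cexp (-(l * gaussianPhase (δ k) (v - m k)))) fun k =>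
    (integrable_cexp_neg_mul_gaussianPhase hl (δ k)).comp_sub_right (m k)

theorem integral_prod_cexp_neg_mul_gaussianPhase_sub (hl : 0 < l) (δ m : ι → ℂ) :
    ∫ w : ι → ℂ, ∏ k, cexp (-(l * gaussianPhase (δ k) (w k - m k))) =
      (2 * Real.pi / l) ^ Fintype.card ι := by
  have hgauss (k : ι) : ∫ v, cexp (-(l * gaussianPhase (δ k) (v - m k))) = 2 * Real.pi / l := by
    rw [integral_sub_right_eq_self fun v => cexp (-(l * gaussianPhase (δ k) v)),
      integral_cexp_neg_mul_gaussianPhase hl, finrank_real_complex]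
    simp
  rw [integral_fintype_prod_volume_eq_prod fun k v => cexp (-(l * gaussianPhase (δ k) (v - m k)))]
  simp_rw [hgauss, Finset.prod_const, Finset.card_univ]

theorem integrable_rpow_mul_cexp_neg_mul_siegelPhase (δ m : ι → ℂ) (D : ℂ) (ha : 0 < a)
    (hl : 0 < l) :
    Integrable (fun y => ((y.2 ^ (a - 1) : ℝ) : ℂ) * cexp (-(l * siegelPhase δ m D y)))
      (siegelMeasure ι) := by
  simp_rw [rpow_mul_cexp_neg_mul_siegelPhase]
  exact ((integrable_prod_cexp_neg_mul_gaussianPhase_sub hl δ m).mul_prod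
    (integrableOn_rpow_mul_cexp_neg_mul_Ioi ha (by simpa))).const_mul _

theorem integral_rpow_mul_cexp_neg_mul_siegelPhase (δ m : ι → ℂ) (D : ℂ) (ha : 0 < a)
    (hl : 0 < l) :
    ∫ y, ((y.2 ^ (a - 1) : ℝ) : ℂ) * cexp (-(l * siegelPhase δ m D y)) ∂siegelMeasure ι =
      (2 * Real.pi) ^ Fintype.card ι * Real.Gamma a *
        (((l ^ (-(a + Fintype.card ι)) : ℝ) : ℂ) * cexp (-(D * l))) := by
  simp_rw [rpow_mul_cexp_neg_mul_siegelPhase]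
  rw [integral_const_mul, siegelMeasure,
    integral_prod_mul (fun w : ι → ℂ => ∏ k, cexp (-(l * gaussianPhase (δ k) (w k - m k))))
      (fun η : ℝ => ((η ^ (a - 1) : ℝ) : ℂ) * cexp (-(l * η))),
    integral_prod_cexp_neg_mul_gaussianPhase_sub hl,
    integral_rpow_mul_cexp_neg_mul_Ioi ha (by simpa), neg_add, Real.rpow_add hl,
    Real.rpow_neg hl.le (Fintype.card ι), Real.rpow_natCast, ← ofReal_neg a, ← ofReal_cpow hl.le,
    mul_comm D]
  push_cast
  ring

theorem ofReal_norm_rpow_mul_cexp_neg_mul_siegelPhase (δ m : ι → ℂ) (D : ℂ) (a l : ℝ)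
    {y : (ι → ℂ) × ℝ} (hy : 0 ≤ y.2) :
    (‖((y.2 ^ a : ℝ) : ℂ) * cexp (-(l * siegelPhase δ m D y))‖ : ℂ) =
      ((y.2 ^ a : ℝ) : ℂ) *
        cexp (-(l * siegelPhase 0 m ((D.re - ∑ k, ‖δ k‖ ^ 2 / 2 : ℝ) : ℂ) y)) := by
  rw [norm_mul, norm_real, Real.norm_of_nonneg (Real.rpow_nonneg hy a), norm_exp, neg_re,
    re_ofReal_mul, ← ofReal_re_siegelPhase]
  push_cast
  rfl

theorem integral_norm_rpow_mul_cexp_neg_mul_siegelPhase (δ m : ι → ℂ) (D : ℂ) (ha : 0 < a)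
    (hl : 0 < l) :
    ∫ y, ‖((y.2 ^ (a - 1) : ℝ) : ℂ) * cexp (-(l * siegelPhase δ m D y))‖ ∂siegelMeasure ι =
      (2 * Real.pi) ^ Fintype.card ι * Real.Gamma a *
        (l ^ (-(a + Fintype.card ι)) * Real.exp (-((D.re - ∑ k, ‖δ k‖ ^ 2 / 2) * l))) := by
  apply ofReal_injective
  have hval := integral_rpow_mul_cexp_neg_mul_siegelPhase 0 m
    ((D.re - ∑ k, ‖δ k‖ ^ 2 / 2 : ℝ) : ℂ) ha hl
  rw [← integral_complex_ofReal]
  push_cast at hval ⊢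
  rw [← hval]
  refine integral_congr_ae ?_
  filter_upwards [ae_snd_siegelMeasure_pos] with y hy
  simpa using ofReal_norm_rpow_mul_cexp_neg_mul_siegelPhase δ m D (a - 1) l hy.le

theorem integrableOn_integral_norm_siegelPhase (δ m : ι → ℂ) (hD : ∑ k, ‖δ k‖ ^ 2 / 2 < D.re)
    (ha : 0 < a) (hσ : a + Fintype.card ι < σ) :
    IntegrableOn (fun l : ℝ => l ^ (σ - 1) *
      ∫ y, ‖((y.2 ^ (a - 1) : ℝ) : ℂ) * cexp (-(l * siegelPhase δ m D y))‖ ∂siegelMeasure ι)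
      (Ioi 0) := by
  refine IntegrableOn.congr_fun (((integrableOn_rpow_mul_exp_neg_mul_Ioi (sub_pos.2 hσ)
    (sub_pos.2 hD)).const_mul ((2 * Real.pi) ^ Fintype.card ι * Real.Gamma a))) (fun l hl => ?_)
    measurableSet_Ioi
  rw [integral_norm_rpow_mul_cexp_neg_mul_siegelPhase δ m D ha hl, mul_left_comm (l ^ (σ - 1)),
    ← mul_assoc (l ^ (σ - 1)), ← Real.rpow_add hl]
  ring_nf

theorem integrable_rpow_mul_siegelPhase_cpow_neg (m : ι → ℂ) (hD : ∑ k, ‖δ k‖ ^ 2 / 2 < D.re)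
    (ha : 0 < a) (hσ : a + Fintype.card ι < σ) :
    Integrable (fun y => ((y.2 ^ (a - 1) : ℝ) : ℂ) * siegelPhase δ m D y ^ (-(σ : ℂ)))
      (siegelMeasure ι) :=
  have hrpow : Measurable fun y : (ι → ℂ) × ℝ => ((y.2 ^ (a - 1) : ℝ) : ℂ) := by fun_prop
  integrable_mul_cpow_neg (hσ.trans' (by positivity)) hrpow.aestronglyMeasurable
    (continuous_siegelPhase δ m D).aestronglyMeasurable
    (ae_snd_siegelMeasure_pos.mono fun y hy => siegelPhase_re_pos hD hy)
    (fun l hl => integrable_rpow_mul_cexp_neg_mul_siegelPhase δ m D ha hl)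
    (integrableOn_integral_norm_siegelPhase δ m hD ha hσ)

theorem integral_rpow_mul_siegelPhase_cpow_neg (m : ι → ℂ) (hD : ∑ k, ‖δ k‖ ^ 2 / 2 < D.re)
    (ha : 0 < a) (hσ : a + Fintype.card ι < σ) :
    ∫ y, ((y.2 ^ (a - 1) : ℝ) : ℂ) * siegelPhase δ m D y ^ (-(σ : ℂ)) ∂siegelMeasure ι =
      (2 * Real.pi) ^ Fintype.card ι * Real.Gamma a * Real.Gamma (σ - (a + Fintype.card ι)) /
        Real.Gamma σ * D ^ (-((σ - (a + Fintype.card ι) : ℝ) : ℂ)) := by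
  have hσ0 : 0 < σ := hσ.trans' (by positivity)
  have hDre : 0 < D.re := hD.trans_le' (by positivity)
  have hΓ : (Real.Gamma σ : ℂ) ≠ 0 := ofReal_ne_zero.2 (Real.Gamma_pos_of_pos hσ0).ne'
  have hrpow : Measurable fun y : (ι → ℂ) × ℝ => ((y.2 ^ (a - 1) : ℝ) : ℂ) := by fun_prop
  have hsub := Gamma_mul_integral_mul_cpow_neg hσ0 hrpow.aestronglyMeasurable
    (continuous_siegelPhase δ m D).aestronglyMeasurable
    (ae_snd_siegelMeasure_pos.mono fun y hy => siegelPhase_re_pos hD hy)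
    (fun l hl => integrable_rpow_mul_cexp_neg_mul_siegelPhase δ m D ha hl)
    (integrableOn_integral_norm_siegelPhase δ m hD ha hσ)
  have hlaplace (l : ℝ) (hl : l ∈ Ioi 0) : ((l ^ (σ - 1) : ℝ) : ℂ) *
      ∫ y, ((y.2 ^ (a - 1) : ℝ) : ℂ) * cexp (-(l * siegelPhase δ m D y)) ∂siegelMeasure ι =
      (2 * Real.pi) ^ Fintype.card ι * Real.Gamma a *
        (((l ^ (σ - (a + Fintype.card ι) - 1) : ℝ) : ℂ) * cexp (-(D * l))) := by
    rw [integral_rpow_mul_cexp_neg_mul_siegelPhase δ m D ha hl,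
      mul_left_comm ((l ^ (σ - 1) : ℝ) : ℂ), ← mul_assoc ((l ^ (σ - 1) : ℝ) : ℂ), ← ofReal_mul,
      ← Real.rpow_add hl]
    ring_nf
  rw [setIntegral_congr_fun measurableSet_Ioi hlaplace, integral_const_mul,
    integral_rpow_mul_cexp_neg_mul_Ioi (sub_pos.2 hσ) hDre] at hsub
  refine mul_left_cancel₀ hΓ (hsub.trans ?_)
  field_simp

end SiegelPhase

section TubeGeometry

variable {n : ℕ} {z u w : Fin (n + 1) → ℂ}

theorem mem_TB_iff_rho_pos : z ∈ TB n ↔ 0 < rho n z := by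
  rw [rho, sub_pos, TB, mem_ofPred_eq]

theorem continuous_rho (n : ℕ) : Continuous (rho n) := by
  unfold rho
  fun_prop

theorem continuous_rho2 (n : ℕ) : Continuous fun p : (Fin (n + 1) → ℂ) × (Fin (n + 1) → ℂ) =>
    rho2 n p.1 p.2 := by
  unfold rho2
  fun_prop

theorem measurableSet_TB (n : ℕ) : MeasurableSet (TB n) := by
  convert (continuous_rho n).measurable (measurableSet_Ioi (a := 0))
  exact Set.ext fun z => mem_TB_iff_rho_pos

theorem conj_rho2 (z w : Fin (n + 1) → ℂ) : conj (rho2 n z w) = rho2 n w z := by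
  simp only [rho2, map_mul, map_sub, map_sum, map_pow, map_div₀, map_one, map_ofNat, conj_conj,
    conj_I]
  have hsq (k : Fin n) : (conj (z k.castSucc) - w k.castSucc) ^ 2 =
    (w k.castSucc - conj (z k.castSucc)) ^ 2 := by ring
  simp only [hsq]
  ring

-- After the `wₙ` terms combine into `4 Im wₙ`, each coordinate contributes
-- `(z - w̄)² + (w - ū)² - (w - w̄)² - (z - ū)² = 2 (w - z) (w̄ - ū)`.
theorem rho2_add_rho2 (z w u : Fin (n + 1) → ℂ) :
    rho2 n z w + rho2 n w u = rho n w + rho2 n z u +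
      ∑ k : Fin n, (w k.castSucc - z k.castSucc) * conj (w k.castSucc - u k.castSucc) / 2 := by
  have him (ζ : ℂ) : ζ - conj ζ = 2 * (ζ.im : ℝ) * I := by exact_mod_cast sub_conj ζ
  have hsum : ∑ k : Fin n, (z k.castSucc - conj (w k.castSucc)) ^ 2 +
      ∑ k : Fin n, (w k.castSucc - conj (u k.castSucc)) ^ 2 +
      4 * ∑ k : Fin n, ((w k.castSucc).im : ℂ) ^ 2 =
      ∑ k : Fin n, (z k.castSucc - conj (u k.castSucc)) ^ 2 + 4 *
      ∑ k : Fin n, (w k.castSucc - z k.castSucc) * conj (w k.castSucc - u k.castSucc) / 2 := by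
    simp_rw [Finset.mul_sum, ← Finset.sum_add_distrib]
    refine Finset.sum_congr rfl fun k _ => ?_
    have hsq := congrArg (· ^ 2) (him (w k.castSucc))
    simp only [mul_pow, I_sq] at hsq
    rw [map_sub]
    linear_combination hsq
  rw [rho, rho2, rho2, rho2]
  push_cast
  linear_combination (1 / 4) * hsum - I / 2 * him (w (Fin.last n)) -
    ((w (Fin.last n)).im : ℂ) * I_sq

theorem rho2_self (z : Fin (n + 1) → ℂ) : rho2 n z z = rho n z := by
  simpa using rho2_add_rho2 z z z

theorem re_rho2 (z w : Fin (n + 1) → ℂ) :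
    (rho2 n z w).re = (rho n z + rho n w) / 2 +
      ∑ k : Fin n, ‖w k.castSucc - z k.castSucc‖ ^ 2 / 4 := by
  have h := congrArg re (rho2_add_rho2 z w z)
  rw [← conj_rho2 z w, add_conj, rho2_self] at h
  simp_rw [mul_conj', ← Finset.sum_div] at h
  norm_cast at h
  rw [← Finset.sum_div]
  linarith

theorem re_rho2_pos (hz : z ∈ TB n) (hw : w ∈ TB n) : 0 < (rho2 n z w).re := by
  rw [mem_TB_iff_rho_pos] at hz hw
  rw [re_rho2]
  positivity

/-- The midpoint of `z'` and `u'`: the centre of the Gaussian in `w'`. -/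
def tubeMid (z u : Fin (n + 1) → ℂ) (k : Fin n) : ℂ :=
  (z k.castSucc + u k.castSucc) / 2

/-- Half the difference of `z'` and `u'`, rotated by `i`: the imaginary shift of the Gaussian in
`w'`. -/
def tubeShift (z u : Fin (n + 1) → ℂ) (k : Fin n) : ℂ :=
  I * ((z k.castSucc - u k.castSucc) / 2)

theorem sum_norm_tubeShift_sq_lt_re_rho2 (hz : z ∈ TB n) (hu : u ∈ TB n) :
    ∑ k, ‖tubeShift z u k‖ ^ 2 / 2 < (rho2 n z u).re := by
  rw [mem_TB_iff_rho_pos] at hz hu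
  rw [re_rho2]
  have hle : ∑ k, ‖tubeShift z u k‖ ^ 2 / 2 ≤
      ∑ k : Fin n, ‖u k.castSucc - z k.castSucc‖ ^ 2 / 4 := by
    refine Finset.sum_le_sum fun k _ => ?_
    rw [tubeShift, norm_mul, norm_I, norm_div, norm_sub_rev, one_mul, div_pow, RCLike.norm_two]
    nlinarith [sq_nonneg ‖u k.castSucc - z k.castSucc‖]
  linarith

end TubeGeometry

section TubeChart

variable {n : ℕ}

/-- Coordinates `((w', ρ(w)), Re wₙ)` on `ℂ^(n+1)`, adapted to the real translations of `T_B`. -/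
def tubeChart (n : ℕ) (q : ((Fin n → ℂ) × ℝ) × ℝ) : Fin (n + 1) → ℂ :=
  Fin.snoc (α := fun _ => ℂ) q.1.1 ⟨q.2, q.1.2 + ∑ k, (q.1.1 k).im ^ 2⟩

theorem tubeChart_castSucc (q : ((Fin n → ℂ) × ℝ) × ℝ) (k : Fin n) :
    tubeChart n q k.castSucc = q.1.1 k := by
  simp [tubeChart]

theorem tubeChart_last (q : ((Fin n → ℂ) × ℝ) × ℝ) :
    tubeChart n q (Fin.last n) = ⟨q.2, q.1.2 + ∑ k, (q.1.1 k).im ^ 2⟩ := by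
  simp [tubeChart]

theorem rho_tubeChart (q : ((Fin n → ℂ) × ℝ) × ℝ) : rho n (tubeChart n q) = q.1.2 := by
  simp [rho, tubeChart_castSucc, tubeChart_last]

theorem tubeChart_mem_TB {q : ((Fin n → ℂ) × ℝ) × ℝ} (hq : 0 < q.1.2) : tubeChart n q ∈ TB n := by
  rwa [mem_TB_iff_rho_pos, rho_tubeChart]

theorem rho2_tubeChart_right (z : Fin (n + 1) → ℂ) (y : (Fin n → ℂ) × ℝ) (x : ℝ) :
    rho2 n z (tubeChart n (y, x)) = rho2 n z (tubeChart n (y, 0)) + ((x / 2 : ℝ) : ℂ) * I := by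
  simp only [rho2, tubeChart_castSucc, tubeChart_last]
  exact Complex.ext (by simp) (by simp; ring)

theorem rho2_tubeChart_left (u : Fin (n + 1) → ℂ) (y : (Fin n → ℂ) × ℝ) (x : ℝ) :
    rho2 n (tubeChart n (y, x)) u = rho2 n (tubeChart n (y, 0)) u - ((x / 2 : ℝ) : ℂ) * I := by
  rw [← conj_rho2, rho2_tubeChart_right, map_add, conj_rho2, map_mul, conj_ofReal, conj_I, mul_neg,
    sub_eq_add_neg]

theorem rho2_tubeChart_add_rho2_tubeChart (z u : Fin (n + 1) → ℂ)
    (q : ((Fin n → ℂ) × ℝ) × ℝ) :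
    rho2 n z (tubeChart n q) + rho2 n (tubeChart n q) u =
      siegelPhase (tubeShift z u) (tubeMid z u) (rho2 n z u) q.1 := by
  rw [rho2_add_rho2, rho_tubeChart, siegelPhase]
  congr 1
  refine Finset.sum_congr rfl fun k _ => ?_
  rw [tubeShift, tubeMid, gaussianPhase_I_mul, tubeChart_castSucc]
  ring_nf

theorem measurePreserving_finSnoc {α : Type*} [MeasureSpace α] [SigmaFinite (volume : Measure α)]
    (n : ℕ) :
    MeasurePreserving fun q : (Fin n → α) × α => (Fin.snoc q.1 q.2 : Fin (n + 1) → α) := by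
  have hcomp : (fun q : (Fin n → α) × α => (Fin.snoc q.1 q.2 : Fin (n + 1) → α)) =
      (MeasurableEquiv.piFinSuccAbove (fun _ => α) (Fin.last n)).symm ∘ Prod.swap :=
    funext fun q => (Fin.insertNth_last' q.2 q.1).symm
  rw [hcomp]
  exact (volume_preserving_piFinSuccAbove (fun _ => α) (Fin.last n)).symm.comp
    Measure.measurePreserving_swap

theorem measurePreserving_tubeChart (n : ℕ) : MeasurePreserving (tubeChart n) := by
  have hshear : MeasurePreserving fun y : (Fin n → ℂ) × ℝ => (y.1, y.2 + ∑ k, (y.1 k).im ^ 2) :=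
    (MeasurePreserving.id volume).skew_product (g := fun (w : Fin n → ℂ) η => η + ∑ k, (w k).im ^ 2)
      (by fun_prop) (.of_forall fun w => (measurePreserving_add_right volume _).map_eq)
  have hpair : MeasurePreserving fun p : ℝ × ℝ => (⟨p.2, p.1⟩ : ℂ) :=
    Complex.volume_preserving_equiv_real_prod.symm.comp Measure.measurePreserving_swap
  exact (measurePreserving_finSnoc n).comp <| ((MeasurePreserving.id volume).prod hpair).comp <|
    (measurePreserving_prodAssoc volume volume volume).comp <|
      hshear.prod (MeasurePreserving.id volume)

theorem measurePreserving_tubeChart_restrict (n : ℕ) :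
    MeasurePreserving (tubeChart n) ((siegelMeasure (Fin n)).prod volume)
      (volume.restrict (TB n)) := by
  have hpre : tubeChart n ⁻¹' TB n = (univ ×ˢ Ioi 0) ×ˢ univ := by
    ext q
    simp [mem_TB_iff_rho_pos, rho_tubeChart]
  have h := (measurePreserving_tubeChart n).restrict_preimage (measurableSet_TB n)
  rwa [hpre, Measure.volume_eq_prod, ← Measure.prod_restrict, Measure.volume_eq_prod,
    ← Measure.prod_restrict, Measure.restrict_univ, Measure.restrict_univ] at h

end TubeChart

section TubeIntegral

variable {n : ℕ} {z u : Fin (n + 1) → ℂ} {r s t p : ℝ}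

theorem setIntegral_TB {f : (Fin (n + 1) → ℂ) → ℂ} (hf : IntegrableOn f (TB n)) :
    ∫ w in TB n, f w = ∫ y, (∫ x, f (tubeChart n (y, x))) ∂siegelMeasure (Fin n) := by
  have hmp := measurePreserving_tubeChart_restrict n
  rw [← hmp.map_eq, integral_map hmp.aemeasurable (hmp.map_eq ▸ hf.1)]
  exact integral_prod _ (hmp.integrable_comp_of_integrable hf)

theorem integral_norm_rho2_tubeChart_rpow (hz : z ∈ TB n) (hp : 1 < p) {y : (Fin n → ℂ) × ℝ}
    (hy : 0 < y.2) :
    ∫ x, ‖rho2 n z (tubeChart n (y, x))‖ ^ (-p) =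
      4 * Real.pi * Real.Gamma (p - 1) / Real.Gamma (p / 2) ^ 2 *
        ‖siegelPhase (tubeShift z z) (tubeMid z z) (rho2 n z z) y ^ (-((p - 1 : ℝ) : ℂ))‖ := by
  have hre : 0 < (rho2 n z (tubeChart n (y, 0))).re := re_rho2_pos hz (tubeChart_mem_TB hy)
  have hphase := rho2_tubeChart_add_rho2_tubeChart z z (y, 0)
  rw [← conj_rho2 z, add_conj] at hphase
  have hshift (x : ℝ) : ‖rho2 n z (tubeChart n (y, x))‖ ^ (-p) =
      ‖rho2 n z (tubeChart n (y, 0)) + ((x / 2 : ℝ) : ℂ) * I‖ ^ (-p) := by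
    rw [rho2_tubeChart_right]
  rw [integral_congr_ae (.of_forall hshift),
    Measure.integral_comp_div (fun x : ℝ => ‖rho2 n z (tubeChart n (y, 0)) + x * I‖ ^ (-p)),
    integral_norm_add_ofReal_mul_I_rpow hre hp, ← hphase, ← ofReal_neg, norm_cpow_real, norm_real,
    Real.norm_of_nonneg (by positivity), abs_two, smul_eq_mul]
  ring

theorem integrableOn_rho_rpow_mul_norm_rho2_rpow (hz : z ∈ TB n) (ht : -1 < t)
    (hp : n + 2 + t < p) :
    IntegrableOn (fun w => rho n w ^ t * ‖rho2 n z w‖ ^ (-p)) (TB n) := by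
  have hp1 : 1 < p := by linarith [n.cast_nonneg (α := ℝ)]
  have hmeas : Measurable fun w => rho n w ^ t * ‖rho2 n z w‖ ^ (-p) := by
    have hrho := (continuous_rho n).measurable
    have hrho2 : Measurable (rho2 n z) := ((continuous_rho2 n).comp (.prodMk_right z)).measurable
    fun_prop
  have hmp := measurePreserving_tubeChart_restrict n
  refine (hmp.integrable_comp hmeas.aestronglyMeasurable).1 ((integrable_prod_iff
    (hmeas.comp hmp.measurable).aestronglyMeasurable).2 ⟨?_, ?_⟩)
  · filter_upwards [ae_snd_siegelMeasure_pos] with y hy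
    have hre : 0 < (rho2 n z (tubeChart n (y, 0))).re := re_rho2_pos hz (tubeChart_mem_TB hy)
    refine (((integrable_norm_add_ofReal_mul_I_rpow hre hp1).comp_div two_ne_zero).const_mul
      (y.2 ^ t)).congr (.of_forall fun x => ?_)
    simp only [Function.comp_apply, rho_tubeChart]
    rw [rho2_tubeChart_right z y x]
  · have hint := integrable_rpow_mul_siegelPhase_cpow_neg (tubeMid z z)
      (sum_norm_tubeShift_sq_lt_re_rho2 hz hz) (a := 1 + t) (σ := p - 1) (by linarith)
      (by rw [Fintype.card_fin]; linarith)
    refine (hint.norm.const_mul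
      (4 * Real.pi * Real.Gamma (p - 1) / Real.Gamma (p / 2) ^ 2)).congr ?_
    filter_upwards [ae_snd_siegelMeasure_pos] with y hy
    have hnorm (x : ℝ) : ‖rho n (tubeChart n (y, x)) ^ t *
        ‖rho2 n z (tubeChart n (y, x))‖ ^ (-p)‖ =
        y.2 ^ t * ‖rho2 n z (tubeChart n (y, x))‖ ^ (-p) := by
      rw [rho_tubeChart, Real.norm_of_nonneg (by positivity)]
    simp_rw [Function.comp_apply, hnorm]
    rw [integral_const_mul, integral_norm_rho2_tubeChart_rpow hz hp1 hy, norm_mul,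
      add_sub_cancel_left, norm_real, Real.norm_of_nonneg (Real.rpow_nonneg hy.le _), mul_left_comm]

/-- The integrand `ρ(w)^t ρ(z,w)^(-r) ρ(w,u)^(-s)`. -/
def rhoKernel (r s t : ℝ) (z u w : Fin (n + 1) → ℂ) : ℂ :=
  ((rho n w ^ t : ℝ) : ℂ) * rho2 n z w ^ (-(r : ℂ)) * rho2 n w u ^ (-(s : ℂ))

theorem rpow_neg_mul_rpow_neg_le_add {a b : ℝ} (ha : 0 < a) (hb : 0 < b) (hr : 0 ≤ r)
    (hs : 0 ≤ s) : a ^ (-r) * b ^ (-s) ≤ a ^ (-(r + s)) + b ^ (-(r + s)) := by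
  rw [neg_add, Real.rpow_add ha, Real.rpow_add hb]
  rcases le_total a b with hab | hba
  · have hle := Real.rpow_le_rpow_of_nonpos ha hab (neg_nonpos.2 hs)
    exact (mul_le_mul_of_nonneg_left hle (by positivity)).trans
      (le_add_of_nonneg_right (by positivity))
  · have hle := Real.rpow_le_rpow_of_nonpos hb hba (neg_nonpos.2 hr)
    exact (mul_le_mul_of_nonneg_right hle (by positivity)).trans
      (le_add_of_nonneg_left (by positivity))

theorem norm_rhoKernel_le (hz : z ∈ TB n) (hu : u ∈ TB n) (hr : 0 ≤ r) (hs : 0 ≤ s) (t : ℝ)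
    {w : Fin (n + 1) → ℂ} (hw : w ∈ TB n) :
    ‖rhoKernel r s t z u w‖ ≤ rho n w ^ t * ‖rho2 n z w‖ ^ (-(r + s)) +
      rho n w ^ t * ‖rho2 n u w‖ ^ (-(r + s)) := by
  have hrho := mem_TB_iff_rho_pos.1 hw
  have hzw := norm_pos_iff.2 (ne_of_apply_ne re (re_rho2_pos hz hw).ne')
  have huw := norm_pos_iff.2 (ne_of_apply_ne re (re_rho2_pos hu hw).ne')
  rw [rhoKernel, norm_mul, norm_mul, norm_real, Real.norm_of_nonneg (by positivity), ← ofReal_neg,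
    ← ofReal_neg, norm_cpow_real, norm_cpow_real, ← conj_rho2 u w, norm_conj, mul_assoc, ← mul_add]
  gcongr
  exact rpow_neg_mul_rpow_neg_le_add hzw huw hr hs

theorem integrableOn_rhoKernel (hz : z ∈ TB n) (hu : u ∈ TB n) (hr : 0 ≤ r) (hs : 0 ≤ s)
    (ht : -1 < t) (hrst : n + 2 + t < r + s) : IntegrableOn (rhoKernel r s t z u) (TB n) := by
  refine ((integrableOn_rho_rpow_mul_norm_rho2_rpow hz ht hrst).add
    (integrableOn_rho_rpow_mul_norm_rho2_rpow hu ht hrst)).mono' ?_ ?_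
  · have hrho := (continuous_rho n).measurable
    have hzw : Measurable (rho2 n z) := ((continuous_rho2 n).comp (.prodMk_right z)).measurable
    have hwu : Measurable fun w => rho2 n w u :=
      ((continuous_rho2 n).comp (.prodMk_left u)).measurable
    unfold rhoKernel
    exact Measurable.aestronglyMeasurable (by fun_prop)
  · filter_upwards [ae_restrict_mem (measurableSet_TB n)] with w hw
    exact norm_rhoKernel_le hz hu hr hs t hw

theorem integral_rhoKernel_tubeChart (hz : z ∈ TB n) (hu : u ∈ TB n) (hr : 0 < r) (hs : 0 < s)
    (hrs : 1 < r + s) (t : ℝ) {y : (Fin n → ℂ) × ℝ} (hy : 0 < y.2) :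
    ∫ x, rhoKernel r s t z u (tubeChart n (y, x)) =
      4 * Real.pi * Real.Gamma (r + s - 1) / (Real.Gamma r * Real.Gamma s) *
        (((y.2 ^ t : ℝ) : ℂ) * siegelPhase (tubeShift z u) (tubeMid z u) (rho2 n z u) y ^
          (-((r + s - 1 : ℝ) : ℂ))) := by
  have hchart := tubeChart_mem_TB (q := (y, 0)) hy
  have hkernel (x : ℝ) : rhoKernel r s t z u (tubeChart n (y, x)) = ((y.2 ^ t : ℝ) : ℂ) *
      cauchyBetaKernel (rho2 n z (tubeChart n (y, 0))) (rho2 n (tubeChart n (y, 0)) u) r s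
        (x / 2) := by
    rw [rhoKernel, rho_tubeChart, rho2_tubeChart_right, rho2_tubeChart_left, mul_assoc,
      cauchyBetaKernel]
  simp_rw [hkernel]
  rw [integral_const_mul, Measure.integral_comp_div,
    integral_cauchyBetaKernel (re_rho2_pos hz hchart) (re_rho2_pos hchart hu) hr hs hrs,
    rho2_tubeChart_add_rho2_tubeChart, abs_two, real_smul]
  push_cast
  ring

end TubeIntegral

theorem stmt7 (n : ℕ) (r s t : ℝ) (hr : 0 < r) (hs : 0 < s) (ht : -1 < t)
    (hrst : (n : ℝ) + 2 < r + s - t)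
    (z u : Fin (n + 1) → ℂ) (hz : z ∈ TB n) (hu : u ∈ TB n) :
    IntegrableOn (fun w => ((rho n w ^ t : ℝ) : ℂ) * rho2 n z w ^ (-(r : ℂ))
        * rho2 n w u ^ (-(s : ℂ))) (TB n) ∧
    ∫ w in TB n, ((rho n w ^ t : ℝ) : ℂ) * rho2 n z w ^ (-(r : ℂ)) * rho2 n w u ^ (-(s : ℂ))
      = ((2 ^ (n + 2) * Real.pi ^ (n + 1) * Real.Gamma (1 + t)
            * Real.Gamma (r + s - t - (n : ℝ) - 2) / (Real.Gamma r * Real.Gamma s) : ℝ) : ℂ)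
        * rho2 n z u ^ (-((r + s - t - (n : ℝ) - 2 : ℝ) : ℂ)) := by
  have hrs : 1 < r + s := by linarith [n.cast_nonneg (α := ℝ)]
  have hσ : 1 + t + Fintype.card (Fin n) < r + s - 1 := by rw [Fintype.card_fin]; linarith
  have hΓ : (Real.Gamma (r + s - 1) : ℂ) ≠ 0 :=
    ofReal_ne_zero.2 (Real.Gamma_pos_of_pos (by linarith)).ne'
  have hint : IntegrableOn (rhoKernel r s t z u) (TB n) :=
    integrableOn_rhoKernel hz hu hr.le hs.le ht (by linarith)
  refine ⟨hint, (setIntegral_TB hint).trans ?_⟩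
  rw [integral_congr_ae (ae_snd_siegelMeasure_pos.mono fun y hy =>
    integral_rhoKernel_tubeChart hz hu hr hs hrs t hy), integral_const_mul]
  have hphase := integral_rpow_mul_siegelPhase_cpow_neg (tubeMid z u)
    (sum_norm_tubeShift_sq_lt_re_rho2 hz hu) (by linarith : 0 < 1 + t) hσ
  rw [add_sub_cancel_left, Fintype.card_fin,
    show r + s - 1 - (1 + t + n) = r + s - t - n - 2 by ring] at hphase
  rw [hphase]
  push_cast
  field_simp
  ring
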